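/- arXiv:2505.15290 — 3 statements merged into one kernel-verified Lean document; each statement's English description precedes it below -/
import Mathlib

section
/- Let X be a nonempty finite set, let κ, λ, μ, ν be probability distributions on X, and let ω be a coupling of λ and μ. Then there exists a coupling π of κ and ν such that d_TV(ω, π) ≤ d_TV(κ, λ) + d_TV(μ, ν). -/
open Finset Filter
open scoped Classical

/-- `μ` is a probability distribution on the finite type `X`. -/
def IsDist {X : Type*} [Fintype X] (μ : X → ℝ) : Prop :=
  (∀ x, 0 ≤ μ x) ∧ ∑ x, μ x = 1

/-- `ω` is a coupling of the distributions `μ` and `ν`. -/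
def IsCoupling {X : Type*} [Fintype X] (ω : X × X → ℝ) (μ ν : X → ℝ) : Prop :=
  IsDist ω ∧ (∀ x, ∑ y, ω (x, y) = μ x) ∧ (∀ x, ∑ y, ω (y, x) = ν x)

/-- Total variation distance: the maximum pointwise difference. -/
noncomputable def dTV {X : Type*} [Fintype X] (μ ν : X → ℝ) : ℝ :=
  ⨆ x, |μ x - ν x|

/-- The support of a (sub)distribution: points of positive probability. -/
def psupp {X : Type*} (μ : X → ℝ) : Set X := {x | 0 < μ x}

/-- Distance between functions into distributions. -/
noncomputable def dF {A B : Type*} [Fintype B] (f g : A → B → ℝ) : ℝ :=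
  ⨆ a, dTV (f a) (g a)

/-!
It suffices to replace one marginal at a time. To turn the second marginal `μ` of `ω` into `ν`, cut
from each column `y` the surplus mass `(μ y - ν y)⁺` proportionally to the entries of that column,
and redistribute the total mass cut from each row over the columns in deficit by a product plan with
column sums `(μ y - ν y)⁻`. The row sums are restored, and an entry of column `y` moves by at most
`(μ y - ν y)⁺ + (μ y - ν y)⁻ = |μ y - ν y|`.
-/

/-- `ω` is a transport plan from `μ` to `ν`: a nonnegative matrix, encoded as a function on pairs,
with row sums `μ` and column sums `ν`. Unlike in a coupling, the total mass is arbitrary and the two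
marginals may live on different types. -/
structure IsTransportPlan {α β 𝕜 : Type*} [Fintype α] [Fintype β] [AddCommMonoid 𝕜] [PartialOrder 𝕜]
    (ω : α × β → 𝕜) (μ : α → 𝕜) (ν : β → 𝕜) : Prop where
  nonneg : ∀ z, 0 ≤ ω z
  sum_row : ∀ x, ∑ y, ω (x, y) = μ x
  sum_col : ∀ y, ∑ x, ω (x, y) = ν y

namespace IsTransportPlan

variable {α β 𝕜 : Type*} [Fintype α] [Fintype β]

section AddCommMonoid

variable [AddCommMonoid 𝕜] [PartialOrder 𝕜] {ω σ : α × β → 𝕜} {μ μ' : α → 𝕜} {ν ν' : β → 𝕜}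

lemma sum_eq_sum_fst (hω : IsTransportPlan ω μ ν) : ∑ z, ω z = ∑ x, μ x := by
  rw [Fintype.sum_prod_type]
  exact Fintype.sum_congr _ _ hω.sum_row

lemma sum_eq_sum_snd (hω : IsTransportPlan ω μ ν) : ∑ z, ω z = ∑ y, ν y := by
  rw [Fintype.sum_prod_type_right]
  exact Fintype.sum_congr _ _ hω.sum_col

lemma swap (hω : IsTransportPlan ω μ ν) : IsTransportPlan (ω ∘ Prod.swap) ν μ :=
  ⟨fun z ↦ hω.nonneg z.swap, hω.sum_col, hω.sum_row⟩

variable [IsOrderedAddMonoid 𝕜]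

lemma fst_nonneg (hω : IsTransportPlan ω μ ν) : 0 ≤ μ := fun x ↦ by
  rw [← hω.sum_row]
  exact sum_nonneg fun y _ ↦ hω.nonneg (x, y)

lemma apply_le_snd (hω : IsTransportPlan ω μ ν) (x : α) (y : β) : ω (x, y) ≤ ν y := by
  rw [← hω.sum_col]
  exact single_le_sum (f := fun x ↦ ω (x, y)) (fun x _ ↦ hω.nonneg (x, y)) (mem_univ x)

lemma add (hω : IsTransportPlan ω μ ν) (hσ : IsTransportPlan σ μ' ν') :
    IsTransportPlan (ω + σ) (μ + μ') (ν + ν') where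
  nonneg z := add_nonneg (hω.nonneg z) (hσ.nonneg z)
  sum_row x := by simp only [Pi.add_apply, sum_add_distrib, hω.sum_row, hσ.sum_row]
  sum_col y := by simp only [Pi.add_apply, sum_add_distrib, hω.sum_col, hσ.sum_col]

end AddCommMonoid

lemma sub [AddCommGroup 𝕜] [PartialOrder 𝕜] [IsOrderedAddMonoid 𝕜] {ω σ : α × β → 𝕜}
    {μ μ' : α → 𝕜} {ν ν' : β → 𝕜} (hω : IsTransportPlan ω μ ν) (hσ : IsTransportPlan σ μ' ν')
    (hle : σ ≤ ω) : IsTransportPlan (ω - σ) (μ - μ') (ν - ν') where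
  nonneg z := sub_nonneg.2 (hle z)
  sum_row x := by simp only [Pi.sub_apply, sum_sub_distrib, hω.sum_row, hσ.sum_row]
  sum_col y := by simp only [Pi.sub_apply, sum_sub_distrib, hω.sum_col, hσ.sum_col]

section Field

variable [Field 𝕜] [LinearOrder 𝕜] [IsStrictOrderedRing 𝕜]

lemma product {μ : α → 𝕜} {ν : β → 𝕜} (hμ : 0 ≤ μ) (hν : 0 ≤ ν) (h : ∑ x, μ x = ∑ y, ν y) :
    IsTransportPlan (fun z ↦ μ z.1 * ν z.2 / ∑ x, μ x) μ ν where
  nonneg z := div_nonneg (mul_nonneg (hμ z.1) (hν z.2)) (sum_nonneg fun x _ ↦ hμ x)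
  sum_row x := by
    simp only [← sum_div, ← mul_sum, ← h]
    exact mul_div_cancel_of_imp fun h₀ ↦
      (sum_eq_zero_iff_of_nonneg fun x _ ↦ hμ x).1 h₀ x (mem_univ x)
  sum_col y := by
    simp only [← sum_div, ← sum_mul, h]
    exact mul_div_cancel_left_of_imp fun h₀ ↦
      (sum_eq_zero_iff_of_nonneg fun y _ ↦ hν y).1 h₀ y (mem_univ y)

variable {ω : α × β → 𝕜} {κ l : α → 𝕜} {μ ν : β → 𝕜}

lemma exists_le_of_le_snd (hω : IsTransportPlan ω l μ) (hν : 0 ≤ ν) (hνμ : ν ≤ μ) :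
    ∃ σ ≤ ω, ∃ l', IsTransportPlan σ l' ν := by
  have hμ : 0 ≤ μ := hν.trans hνμ
  refine ⟨fun z ↦ ω z * (ν z.2 / μ z.2), fun z ↦ ?_, _, fun z ↦ ?_, fun x ↦ rfl, fun y ↦ ?_⟩
  · exact mul_le_of_le_one_right (hω.nonneg z) (div_le_one_of_le₀ (hνμ z.2) (hμ z.2))
  · exact mul_nonneg (hω.nonneg z) (div_nonneg (hν z.2) (hμ z.2))
  · simp only [← sum_mul, hω.sum_col]
    exact mul_div_cancel_of_imp' fun h₀ ↦ le_antisymm (h₀ ▸ hνμ y) (hν y)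

lemma exists_snd_sub_add {p q : β → 𝕜} (hω : IsTransportPlan ω l μ) (hp : 0 ≤ p) (hpμ : p ≤ μ)
    (hq : 0 ≤ q) (hpq : ∑ y, p y = ∑ y, q y) :
    ∃ π, IsTransportPlan π l (μ - p + q) ∧ ∀ x y, |ω (x, y) - π (x, y)| ≤ p y + q y := by
  obtain ⟨σ, hσω, l', hσ⟩ := hω.exists_le_of_le_snd hp hpμ
  have hl'q : ∑ x, l' x = ∑ y, q y := by rw [← hσ.sum_eq_sum_fst, hσ.sum_eq_sum_snd, hpq]
  obtain ⟨τ, hτ⟩ : ∃ τ, IsTransportPlan τ l' q := ⟨_, product hσ.fst_nonneg hq hl'q⟩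
  refine ⟨ω - σ + τ, ?_, fun x y ↦ ?_⟩
  · simpa only [sub_add_cancel] using (hω.sub hσ hσω).add hτ
  · calc |ω (x, y) - (ω - σ + τ) (x, y)|
      _ = |σ (x, y) - τ (x, y)| := by simp only [Pi.add_apply, Pi.sub_apply]; ring_nf
      _ ≤ σ (x, y) + τ (x, y) :=
        abs_le.2 ⟨by linarith [hσ.nonneg (x, y)], by linarith [hτ.nonneg (x, y)]⟩
      _ ≤ p y + q y := add_le_add (hσ.apply_le_snd x y) (hτ.apply_le_snd x y)

theorem exists_abs_sub_le_snd (hω : IsTransportPlan ω l μ) (hν : 0 ≤ ν)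
    (hμν : ∑ y, μ y = ∑ y, ν y) :
    ∃ π, IsTransportPlan π l ν ∧ ∀ x y, |ω (x, y) - π (x, y)| ≤ |μ y - ν y| := by
  have surplus_le : (fun y ↦ (μ y - ν y)⁺) ≤ μ := fun y ↦
    sup_le (sub_le_self _ (hν y)) (hω.swap.fst_nonneg y)
  have sum_surplus_eq : ∑ y, (μ y - ν y)⁺ = ∑ y, (μ y - ν y)⁻ := by
    rw [← sub_eq_zero, ← sum_sub_distrib]
    simp only [posPart_sub_negPart, sum_sub_distrib, hμν, sub_self]
  obtain ⟨π, hπ, hωπ⟩ := hω.exists_snd_sub_add (fun y ↦ posPart_nonneg _) surplus_le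
    (fun y ↦ negPart_nonneg _) sum_surplus_eq
  have snd_eq : (μ - fun y ↦ (μ y - ν y)⁺) + (fun y ↦ (μ y - ν y)⁻) = ν := funext fun y ↦ by
    simp only [Pi.add_apply, Pi.sub_apply]
    linarith [posPart_sub_negPart (μ y - ν y)]
  exact ⟨π, snd_eq ▸ hπ, fun x y ↦ (hωπ x y).trans_eq (posPart_add_negPart _)⟩

theorem exists_abs_sub_le (hω : IsTransportPlan ω l μ) (hκ : 0 ≤ κ) (hν : 0 ≤ ν)
    (hκl : ∑ x, κ x = ∑ x, l x) (hμν : ∑ y, μ y = ∑ y, ν y) :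
    ∃ π, IsTransportPlan π κ ν ∧ ∀ x y, |ω (x, y) - π (x, y)| ≤ |κ x - l x| + |μ y - ν y| := by
  obtain ⟨ρ, hρ, hωρ⟩ := hω.exists_abs_sub_le_snd hν hμν
  obtain ⟨π, hπ, hρπ⟩ := hρ.swap.exists_abs_sub_le_snd hκ hκl.symm
  refine ⟨π ∘ Prod.swap, hπ.swap, fun x y ↦ ?_⟩
  calc |ω (x, y) - π (y, x)|
    _ ≤ |ω (x, y) - ρ (x, y)| + |ρ (x, y) - π (y, x)| := abs_sub_le _ _ _
    _ ≤ |μ y - ν y| + |l x - κ x| := add_le_add (hωρ x y) (hρπ y x)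
    _ = |κ x - l x| + |μ y - ν y| := by rw [add_comm, abs_sub_comm]

end Field

end IsTransportPlan

lemma isCoupling_iff_isTransportPlan {X : Type*} [Fintype X] {ω : X × X → ℝ} {μ ν : X → ℝ} :
    IsCoupling ω μ ν ↔ IsTransportPlan ω μ ν ∧ ∑ x, μ x = 1 := by
  constructor
  · rintro ⟨⟨hnonneg, hsum⟩, hrow, hcol⟩
    have hω : IsTransportPlan ω μ ν := ⟨hnonneg, hrow, hcol⟩
    exact ⟨hω, hω.sum_eq_sum_fst.symm.trans hsum⟩
  · rintro ⟨hω, hμ⟩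
    exact ⟨⟨hω.nonneg, hω.sum_eq_sum_fst.trans hμ⟩, hω.sum_row, hω.sum_col⟩

lemma abs_sub_le_dTV {X : Type*} [Fintype X] (μ ν : X → ℝ) (x : X) : |μ x - ν x| ≤ dTV μ ν :=
  le_ciSup (f := fun x ↦ |μ x - ν x|) (Set.finite_range _).bddAbove x

theorem coupling_perturbation_both_general {α β : Type*} [Fintype α] [Fintype β] [Nonempty α]
    [Nonempty β] {κ l : α → ℝ} {μ ν : β → ℝ} {ω : α × β → ℝ} (hω : IsTransportPlan ω l μ)
    (hκ : 0 ≤ κ) (hν : 0 ≤ ν) (hκl : ∑ x, κ x = ∑ x, l x) (hμν : ∑ y, μ y = ∑ y, ν y) :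
    ∃ π, IsTransportPlan π κ ν ∧ dTV ω π ≤ dTV κ l + dTV μ ν := by
  obtain ⟨π, hπ, hωπ⟩ := hω.exists_abs_sub_le hκ hν hκl hμν
  exact ⟨π, hπ, ciSup_le fun (x, y) ↦
    (hωπ x y).trans (add_le_add (abs_sub_le_dTV κ l x) (abs_sub_le_dTV μ ν y))⟩

/-- Corollary 9: given a coupling `ω` of `l` and `μ`, there is a coupling `π` of `κ` and `ν`
with `d_TV(ω,π) ≤ d_TV(κ,l) + d_TV(μ,ν)`. -/
theorem coupling_perturbation_both {X : Type*} [Fintype X] [Nonempty X]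
    (κ l μ ν : X → ℝ) (hκ : IsDist κ) (hl : IsDist l) (hμ : IsDist μ) (hν : IsDist ν)
    (ω : X × X → ℝ) (hω : IsCoupling ω l μ) :
    ∃ π : X × X → ℝ, IsCoupling π κ ν ∧ dTV ω π ≤ dTV κ l + dTV μ ν := by
  obtain ⟨hω, -⟩ := isCoupling_iff_isTransportPlan.1 hω
  obtain ⟨π, hπ, hωπ⟩ := coupling_perturbation_both_general hω hκ.1 hν.1
    (hκ.2.trans hl.2.symm) (hμ.2.trans hν.2.symm)
  exact ⟨π, isCoupling_iff_isTransportPlan.2 ⟨hπ, hκ.2⟩, hωπ⟩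
end

section
/- Fix a labelled Markov chain ⟨S, L, τ, ℓ⟩ and states s, t ∈ S. For every policy P ∈ P_τ there exists an S²_Δ-closed policy Q ∈ P_τ such that the probability with which (s,t) reaches S²_Δ in ⟨S×S, Q⟩ equals the probability with which (s,t) reaches S²_Δ in ⟨S×S, P⟩, i.e., ρ_Q(s,t) = ρ_P(s,t). -/
open Finset Filter
open scoped Classical

/-- `τ` is a transition probability function on `S`. -/
def IsTransFn {S : Type*} [Fintype S] (τ : S → S → ℝ) : Prop := ∀ s, IsDist (τ s)

/-- The diagonal `S²_Δ`. -/
def SDelta (S : Type*) : Set (S × S) := {p | p.1 = p.2}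

/-- `P` is a policy for `τ` (with labelling `ℓ`). -/
def IsPolicy {S L : Type*} [Fintype S] (ℓ : S → L) (τ : S → S → ℝ)
    (P : S × S → S × S → ℝ) : Prop :=
  (∀ p, IsDist (P p)) ∧
  (∀ p : S × S, ℓ p.1 = ℓ p.2 → IsCoupling (P p) (τ p.1) (τ p.2)) ∧
  (∀ p : S × S, ℓ p.1 ≠ ℓ p.2 → psupp (P p) = {p})

/-- A policy is `S²_Δ`-closed if the support of `P (s,s)` lies in the diagonal. -/
def DeltaClosed {S : Type*} (P : S × S → S × S → ℝ) : Prop :=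
  ∀ s : S, psupp (P (s, s)) ⊆ SDelta S

/-- `d` is a `[0,1]`-valued function. -/
def Is01 {A : Type*} (d : A → ℝ) : Prop := ∀ a, 0 ≤ d a ∧ d a ≤ 1

/-- `d` is the least fixed point of `F` on the complete lattice of `[0,1]`-valued functions. -/
def IsLfpOn {A : Type*} (F : (A → ℝ) → (A → ℝ)) (d : A → ℝ) : Prop :=
  Is01 d ∧ F d = d ∧ ∀ e, Is01 e → F e = e → ∀ a, d a ≤ e a

/-- The map `Γ_P` whose least fixed point is `γ_P`. -/
noncomputable def GammaF {S L : Type*} [Fintype S] (ℓ : S → L)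
    (P : S × S → S × S → ℝ) (d : S × S → ℝ) : S × S → ℝ :=
  fun p => if ℓ p.1 ≠ ℓ p.2 then 1 else ∑ q, P p q * d q

/-- The map `Δ_τ` whose least fixed point is the probabilistic bisimilarity distance `δ_τ`. -/
noncomputable def DeltaF {S L : Type*} [Fintype S] (ℓ : S → L)
    (τ : S → S → ℝ) (d : S × S → ℝ) : S × S → ℝ :=
  fun p => if ℓ p.1 ≠ ℓ p.2 then 1
    else sInf {r | ∃ ω, IsCoupling ω (τ p.1) (τ p.2) ∧ r = ∑ q, ω q * d q}

/-- The map whose least fixed point is `ρ_P`, the probability of reaching `S²_Δ`. -/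
noncomputable def ReachF {S : Type*} [Fintype S]
    (P : S × S → S × S → ℝ) (e : S × S → ℝ) : S × S → ℝ :=
  fun p => if p.1 = p.2 then 1 else ∑ q, P p q * e q

/-- States `s` and `t` are robustly probabilistically bisimilar. -/
def Robust {S L : Type*} [Fintype S] (ℓ : S → L) (τ : S → S → ℝ) (s t : S) : Prop :=
  ∃ P ρ, IsPolicy ℓ τ P ∧ IsLfpOn (ReachF P) ρ ∧ ρ (s, t) = 1

/-- `R` is a probabilistic bisimulation. -/
def IsBisim {S L : Type*} [Fintype S] (ℓ : S → L) (τ : S → S → ℝ)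
    (R : Set (S × S)) : Prop :=
  Equivalence (fun s t => (s, t) ∈ R) ∧
  ∀ p ∈ R, ℓ p.1 = ℓ p.2 ∧ ∃ ω, IsCoupling ω (τ p.1) (τ p.2) ∧ psupp ω ⊆ R

/-- Probabilistic bisimilarity `∼`. -/
def Bisimilar {S L : Type*} [Fintype S] (ℓ : S → L) (τ : S → S → ℝ) (s t : S) : Prop :=
  ∃ R, IsBisim ℓ τ R ∧ (s, t) ∈ R

/-- A step of a path in `⟨S×S, P⟩` supported by `R`. -/
def SupStep {S : Type*} (P : S × S → S × S → ℝ) (R : Set (S × S)) (a b : S × S) : Prop :=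
  a ∈ R ∧ psupp (P a) ⊆ R ∧ 0 < P a b

/-- `R` supports a path from `p` to `S²_Δ` in `⟨S×S, P⟩`. -/
def SupportsPathToDelta {S : Type*} (P : S × S → S × S → ℝ) (R : Set (S × S))
    (p : S × S) : Prop :=
  ∃ q : S × S, q.1 = q.2 ∧ Relation.ReflTransGen (SupStep P R) p q ∧
    q ∈ R ∧ psupp (P q) ⊆ R

/-- `R` is a robust bisimulation. -/
def IsRobustBisim {S L : Type*} [Fintype S] (ℓ : S → L) (τ : S → S → ℝ)
    (R : Set (S × S)) : Prop :=
  IsBisim ℓ τ R ∧ ∀ p ∈ R, ∃ P, IsPolicy ℓ τ P ∧ SupportsPathToDelta P R p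

/-- The function `Filter` from the algorithm. -/
def FilterFn {S L : Type*} [Fintype S] (ℓ : S → L) (τ : S → S → ℝ)
    (R : Set (S × S)) : Set (S × S) :=
  {p ∈ R | ∃ P, IsPolicy ℓ τ P ∧ SupportsPathToDelta P R p}

/-- The function `Prune` from the algorithm. -/
def PruneFn {S : Type*} (Q : Set (S × S)) : Set (S × S) :=
  {p ∈ Q | ∀ u : S, ((p.2, u) ∈ Q → (p.1, u) ∈ Q) ∧ ((u, p.1) ∈ Q → (u, p.2) ∈ Q)}

/-- `B` is the greatest probabilistic bisimulation contained in `Q` (i.e. `B = Bisim(Q)`). -/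
def IsGreatestBisimIn {S L : Type*} [Fintype S] (ℓ : S → L) (τ : S → S → ℝ)
    (Q B : Set (S × S)) : Prop :=
  IsBisim ℓ τ B ∧ B ⊆ Q ∧ ∀ B', IsBisim ℓ τ B' → B' ⊆ Q → B' ⊆ B

/-- Reachability in the Markov chain `⟨S×S, P⟩`. -/
def Reach {S : Type*} (P : S × S → S × S → ℝ) (p q : S × S) : Prop :=
  Relation.ReflTransGen (fun a b => 0 < P a b) p q

/-- `C` is a communication class of `⟨S×S, P⟩`. -/
def IsCommClass {S : Type*} (P : S × S → S × S → ℝ) (C : Set (S × S)) : Prop :=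
  ∃ p, C = {q | Reach P p q ∧ Reach P q p}

/-- `C` is closed: no transition of positive probability leaves `C`. -/
def IsClosedClass {S : Type*} (P : S × S → S × S → ℝ) (C : Set (S × S)) : Prop :=
  ∀ p ∈ C, psupp (P p) ⊆ C

/-!
The map whose least fixed point is the probability of reaching the diagonal is constantly `1` on
the diagonal, so it ignores what a policy does there. Hence a policy may be redefined on the
diagonal by the diagonal self-coupling of `τ s`, which never leaves the diagonal, without changing
any reachability probability.
-/

/-- The coupling of `μ` with itself concentrated on the diagonal: draw `x` from `μ` and return
`(x, x)`. -/
noncomputable def diagCoupling {X : Type*} (μ : X → ℝ) : X × X → ℝ :=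
  fun q => if q.1 = q.2 then μ q.1 else 0

section DiagCoupling

variable {X : Type*}

theorem psupp_diagCoupling_subset (μ : X → ℝ) : psupp (diagCoupling μ) ⊆ SDelta X := by
  intro q (hq : 0 < diagCoupling μ q)
  by_contra hne
  exact hq.ne' (if_neg hne)

variable [Fintype X]

theorem sum_diagCoupling_left (μ : X → ℝ) (x : X) : ∑ y, diagCoupling μ (x, y) = μ x := by
  simp [diagCoupling]

theorem sum_diagCoupling_right (μ : X → ℝ) (y : X) : ∑ x, diagCoupling μ (x, y) = μ y := by
  simp [diagCoupling]

theorem isDist_diagCoupling {μ : X → ℝ} (hμ : IsDist μ) : IsDist (diagCoupling μ) := by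
  refine ⟨fun q => ite_nonneg (hμ.1 q.1) le_rfl, ?_⟩
  simpa only [Fintype.sum_prod_type, sum_diagCoupling_left] using hμ.2

theorem isCoupling_diagCoupling {μ : X → ℝ} (hμ : IsDist μ) :
    IsCoupling (diagCoupling μ) μ μ :=
  ⟨isDist_diagCoupling hμ, sum_diagCoupling_left μ, sum_diagCoupling_right μ⟩

end DiagCoupling

/-- The policy that moves as `P` off the diagonal, and on the diagonal lets the two components,
once equal, move together according to `τ`. -/
noncomputable def deltaClosure {S : Type*} (τ : S → S → ℝ) (P : S × S → S × S → ℝ) :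
    S × S → S × S → ℝ :=
  fun p => if p.1 = p.2 then diagCoupling (τ p.1) else P p

section DeltaClosure

variable {S : Type*}

theorem deltaClosure_diag (τ : S → S → ℝ) (P : S × S → S × S → ℝ) (s : S) :
    deltaClosure τ P (s, s) = diagCoupling (τ s) :=
  if_pos rfl

theorem deltaClosure_of_ne (τ : S → S → ℝ) (P : S × S → S × S → ℝ) {p : S × S}
    (hp : p.1 ≠ p.2) : deltaClosure τ P p = P p :=
  if_neg hp

theorem deltaClosed_deltaClosure (τ : S → S → ℝ) (P : S × S → S × S → ℝ) :
    DeltaClosed (deltaClosure τ P) := by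
  intro s
  rw [deltaClosure_diag]
  exact psupp_diagCoupling_subset (τ s)

variable [Fintype S]

theorem isPolicy_deltaClosure {L : Type*} {ℓ : S → L} {τ : S → S → ℝ}
    {P : S × S → S × S → ℝ} (hτ : IsTransFn τ) (hP : IsPolicy ℓ τ P) :
    IsPolicy ℓ τ (deltaClosure τ P) := by
  refine ⟨fun ⟨s, t⟩ => ?_, fun ⟨s, t⟩ hst => ?_, fun p hp => ?_⟩
  · obtain rfl | hne := eq_or_ne s t
    · rw [deltaClosure_diag]
      exact isDist_diagCoupling (hτ s)
    · rw [deltaClosure_of_ne τ P hne]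
      exact hP.1 (s, t)
  · obtain rfl | hne := eq_or_ne s t
    · rw [deltaClosure_diag]
      exact isCoupling_diagCoupling (hτ s)
    · rw [deltaClosure_of_ne τ P hne]
      exact hP.2.1 (s, t) hst
  · have hne : p.1 ≠ p.2 := fun h => hp (congrArg ℓ h)
    rw [deltaClosure_of_ne τ P hne]
    exact hP.2.2 p hp

theorem reachF_congr_of_ne {P Q : S × S → S × S → ℝ} (h : ∀ p : S × S, p.1 ≠ p.2 → P p = Q p) :
    ReachF P = ReachF Q := by
  funext e p
  by_cases hp : p.1 = p.2
  · simp only [ReachF, if_pos hp]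
  · simp only [ReachF, if_neg hp, h p hp]

theorem reachF_deltaClosure (τ : S → S → ℝ) (P : S × S → S × S → ℝ) :
    ReachF (deltaClosure τ P) = ReachF P :=
  reachF_congr_of_ne fun _ => deltaClosure_of_ne τ P

end DeltaClosure

/-- Proposition 22: for every policy `P` there is an `S²_Δ`-closed policy `Q` such that
`(s,t)` reaches `S²_Δ` with the same probability under `Q` as under `P`. -/
theorem delta_closed_policy_same_reach {S L : Type*} [Fintype S] [Nonempty S] [Fintype L]
    (ℓ : S → L) (hℓ : ∃ a b : S, ℓ a ≠ ℓ b)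
    (τ : S → S → ℝ) (hτ : IsTransFn τ) (s t : S)
    (P : S × S → S × S → ℝ) (hP : IsPolicy ℓ τ P)
    (ρP : S × S → ℝ) (hρP : IsLfpOn (ReachF P) ρP) :
    ∃ (Q : S × S → S × S → ℝ) (ρQ : S × S → ℝ),
      IsPolicy ℓ τ Q ∧ DeltaClosed Q ∧ IsLfpOn (ReachF Q) ρQ ∧
      ρQ (s, t) = ρP (s, t) := by
  have hlfp : IsLfpOn (ReachF (deltaClosure τ P)) ρP := by
    rwa [reachF_deltaClosure]
  exact ⟨deltaClosure τ P, ρP, isPolicy_deltaClosure hτ hP, deltaClosed_deltaClosure τ P,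
    hlfp, rfl⟩
end

section
/- Fix a finite state set S, a finite label set L and a labelling ℓ : S → L taking at least two distinct values. For all states s, t ∈ S, the probabilistic bisimilarity distance function τ ↦ δ_τ(s,t) is lower semi-continuous: for every transition probability function τ : S → D(S) and every sequence (τ_n) of transition probability functions converging to τ (in the metric d_F), liminf_n δ_{τ_n}(s,t) ≥ δ_τ(s,t). -/
open Finset Filter
open scoped Classical

/-!
Lower semicontinuity follows from closedness of the sublevel sets `{τ | δ_τ(s,t) ≤ c}`. Since an
optimal coupling exists for every pair of states, `Δ_τ d = Γ_P d` for some policy `P`, while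
`Δ_τ d ≤ Γ_P d` for all of them. By Knaster–Tarski, `δ_τ(s,t) ≤ c` therefore holds iff there are a
policy `P` for `τ` and a `[0,1]`-valued `d` with `Γ_P d ≤ d` and `d(s,t) ≤ c`. The triples
`(τ, P, d)` satisfying these conditions form a compact set, because the conditions are closed and
all entries lie in `[0,1]`, and the sublevel set is its projection to `τ`.
-/

open scoped Topology

section Distributions

variable {X : Type*} [Fintype X] {μ ν : X → ℝ}

lemma isClosed_setOf_isDist : IsClosed {μ : X → ℝ | IsDist μ} :=
  isClosed_stdSimplex ℝ X

lemma isCompact_setOf_isDist : IsCompact {μ : X → ℝ | IsDist μ} :=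
  isCompact_stdSimplex ℝ X

lemma IsDist.psupp_eq_singleton_iff (hμ : IsDist μ) (x : X) : psupp μ = {x} ↔ μ x = 1 := by
  constructor
  · intro h
    have eq_zero (y : X) (hy : y ≠ x) : μ y = 0 :=
      (hμ.1 y).antisymm' <| not_lt.1 fun hpos ↦ hy (h.subset hpos)
    rw [← hμ.2, Fintype.sum_eq_single x eq_zero]
  · refine fun h ↦ Set.eq_singleton_iff_unique_mem.2 ⟨by simp [psupp, h], fun y hy ↦ ?_⟩
    by_contra hne
    have hsum : μ x + μ y ≤ 1 :=
      hμ.2 ▸ add_le_sum (fun z _ ↦ hμ.1 z) (mem_univ x) (mem_univ y) (Ne.symm hne)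
    have hpos : 0 < μ y := hy
    linarith

lemma IsDist.isCoupling_mul (hμ : IsDist μ) (hν : IsDist ν) :
    IsCoupling (fun p ↦ μ p.1 * ν p.2) μ ν := by
  refine ⟨⟨fun p ↦ mul_nonneg (hμ.1 _) (hν.1 _), ?_⟩, fun x ↦ ?_, fun x ↦ ?_⟩
  · rw [Fintype.sum_prod_type, ← Fintype.sum_mul_sum, hμ.2, hν.2, one_mul]
  · simp only [← mul_sum, hν.2, mul_one]
  · simp only [← sum_mul, hμ.2, one_mul]

lemma IsCoupling.isDist_left {ω : X × X → ℝ} (h : IsCoupling ω μ ν) : IsDist μ := by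
  refine ⟨fun x ↦ h.2.1 x ▸ sum_nonneg fun y _ ↦ h.1.1 _, ?_⟩
  simp only [← h.2.1, ← Fintype.sum_prod_type, h.1.2]

lemma isClosed_setOf_isCoupling :
    IsClosed {x : (X × X → ℝ) × (X → ℝ) × (X → ℝ) | IsCoupling x.1 x.2.1 x.2.2} := by
  simp only [IsCoupling, Set.ofPred_and, Set.ofPred_forall]
  exact .inter (isClosed_setOf_isDist.preimage continuous_fst) <|
    .inter (isClosed_iInter fun x ↦ isClosed_eq (by fun_prop) (by fun_prop))
      (isClosed_iInter fun x ↦ isClosed_eq (by fun_prop) (by fun_prop))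

lemma isCompact_setOf_isCoupling (μ ν : X → ℝ) : IsCompact {ω | IsCoupling ω μ ν} :=
  isCompact_setOf_isDist.of_isClosed_subset
    (isClosed_setOf_isCoupling.preimage (f := fun ω ↦ (ω, μ, ν)) (by fun_prop)) fun _ h ↦ h.1

lemma IsDist.exists_optimal_coupling (hμ : IsDist μ) (hν : IsDist ν) (d : X × X → ℝ) :
    ∃ ω, IsCoupling ω μ ν ∧
      IsLeast {r | ∃ ω, IsCoupling ω μ ν ∧ r = ∑ q, ω q * d q} (∑ q, ω q * d q) := by
  have hcont : Continuous fun ω : X × X → ℝ ↦ ∑ q, ω q * d q := by fun_prop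
  obtain ⟨ω, hω, hmin⟩ := (isCompact_setOf_isCoupling μ ν).exists_isMinOn
    ⟨_, hμ.isCoupling_mul hν⟩ hcont.continuousOn
  refine ⟨ω, hω, ⟨ω, hω, rfl⟩, ?_⟩
  rintro _ ⟨ω', hω', rfl⟩
  exact hmin hω'

lemma abs_sub_le_dF {A : Type*} [Finite A] (f g : A → X → ℝ) (a : A) (x : X) :
    |f a x - g a x| ≤ dF f g :=
  calc |f a x - g a x| ≤ dTV (f a) (g a) :=
        le_ciSup (f := fun x ↦ |f a x - g a x|) (Set.finite_range _).bddAbove x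
    _ ≤ dF f g := le_ciSup (f := fun a ↦ dTV (f a) (g a)) (Set.finite_range _).bddAbove a

lemma tendsto_of_tendsto_dF {ι A : Type*} [Finite A] {F : Filter ι} {f : ι → A → X → ℝ}
    {g : A → X → ℝ} (h : Tendsto (fun i ↦ dF (f i) g) F (𝓝 0)) : Tendsto f F (𝓝 g) := by
  refine tendsto_pi_nhds.2 fun a ↦ tendsto_pi_nhds.2 fun x ↦ ?_
  exact tendsto_iff_dist_tendsto_zero.2 <|
    squeeze_zero (fun _ ↦ dist_nonneg) (fun i ↦ abs_sub_le_dF (f i) g a x) h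

end Distributions

section UnitValued

variable {A : Type*}

lemma is01_iff_mem_Icc {d : A → ℝ} : Is01 d ↔ d ∈ Set.Icc 0 1 :=
  forall_and

lemma isCompact_setOf_is01 : IsCompact {d : A → ℝ | Is01 d} := by
  simp only [is01_iff_mem_Icc, Set.ofPred_mem_eq, isCompact_Icc]

lemma IsLfpOn.le_of_map_le {F : (A → ℝ) → A → ℝ} {d e : A → ℝ} (hd : IsLfpOn F d)
    (hmaps : Set.MapsTo F {d | Is01 d} {d | Is01 d}) (hmono : MonotoneOn F {d | Is01 d})
    (he : Is01 e) (hle : F e ≤ e) : d ≤ e := by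
  simp only [is01_iff_mem_Icc, Set.ofPred_mem_eq] at hmaps hmono he
  have : Fact ((0 : A → ℝ) ≤ 1) := ⟨zero_le_one⟩
  let G : Set.Icc (0 : A → ℝ) 1 →o Set.Icc (0 : A → ℝ) 1 :=
    ⟨hmaps.restrict F _ _, fun x y hxy ↦ hmono x.2 y.2 hxy⟩
  calc d ≤ (G.lfp : A → ℝ) :=
        hd.2.2 _ (is01_iff_mem_Icc.2 G.lfp.2) (congrArg Subtype.val G.map_lfp)
    _ ≤ e := G.lfp_le (a := ⟨e, he⟩) hle

end UnitValued

section Policies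

variable {S L : Type*} [Fintype S] {ℓ : S → L} {τ : S → S → ℝ} {P : S × S → S × S → ℝ}
  {d e : S × S → ℝ}

lemma IsPolicy.isTransFn (hP : IsPolicy ℓ τ P) : IsTransFn τ :=
  fun s ↦ (hP.2.1 (s, s) rfl).isDist_left

-- The support condition in `IsPolicy` is not visibly closed in `P`; the equation `P p p = 1` is.
lemma isPolicy_iff_apply_self_eq_one :
    IsPolicy ℓ τ P ↔ (∀ p, IsDist (P p)) ∧
      (∀ p : S × S, ℓ p.1 = ℓ p.2 → IsCoupling (P p) (τ p.1) (τ p.2)) ∧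
      ∀ p : S × S, ℓ p.1 ≠ ℓ p.2 → P p p = 1 :=
  and_congr_right fun hP ↦ and_congr_right fun _ ↦ forall_congr' fun p ↦
    imp_congr_right fun _ ↦ (hP p).psupp_eq_singleton_iff p

lemma isClosed_setOf_isPolicy (ℓ : S → L) :
    IsClosed {x : (S → S → ℝ) × (S × S → S × S → ℝ) | IsPolicy ℓ x.1 x.2} := by
  simp only [isPolicy_iff_apply_self_eq_one, Set.ofPred_and, Set.ofPred_forall]
  refine .inter (isClosed_iInter fun p ↦ ?_) (.inter (isClosed_iInter fun p ↦ ?_)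
    (isClosed_iInter fun p ↦ isClosed_iInter fun _ ↦ isClosed_eq (by fun_prop) (by fun_prop)))
  · exact isClosed_setOf_isDist.preimage
      (f := fun x : (S → S → ℝ) × (S × S → S × S → ℝ) ↦ x.2 p) (by fun_prop)
  · exact isClosed_iInter fun _ ↦ isClosed_setOf_isCoupling.preimage
      (f := fun x : (S → S → ℝ) × (S × S → S × S → ℝ) ↦ (x.2 p, x.1 p.1, x.1 p.2)) (by fun_prop)

lemma continuous_gammaF (ℓ : S → L) :
    Continuous fun x : (S × S → S × S → ℝ) × (S × S → ℝ) ↦ GammaF ℓ x.1 x.2 := by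
  refine continuous_pi fun p ↦ ?_
  by_cases hp : ℓ p.1 ≠ ℓ p.2
  · simp only [GammaF, if_pos hp, continuous_const]
  · simp only [GammaF, if_neg hp]
    fun_prop

lemma gammaF_mono (ℓ : S → L) (hP : ∀ p, IsDist (P p)) : Monotone (GammaF ℓ P) := by
  intro d e hde p
  simp only [GammaF]
  split_ifs
  · exact le_rfl
  · exact sum_le_sum fun q _ ↦ mul_le_mul_of_nonneg_left (hde q) ((hP p).1 q)

lemma Is01.gammaF (hd : Is01 d) (ℓ : S → L) (hP : ∀ p, IsDist (P p)) : Is01 (GammaF ℓ P d) := by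
  intro p
  simp only [GammaF]
  split_ifs
  · exact ⟨zero_le_one, le_rfl⟩
  · refine ⟨sum_nonneg fun q _ ↦ mul_nonneg ((hP p).1 q) (hd q).1, ?_⟩
    calc ∑ q, P p q * d q ≤ ∑ q, P p q :=
          sum_le_sum fun q _ ↦ mul_le_of_le_one_right ((hP p).1 q) (hd q).2
      _ = 1 := (hP p).2

lemma deltaF_apply_of_isLeast {p : S × S} {r : ℝ} (hp : ℓ p.1 = ℓ p.2)
    (hr : IsLeast {r | ∃ ω, IsCoupling ω (τ p.1) (τ p.2) ∧ r = ∑ q, ω q * d q} r) :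
    DeltaF ℓ τ d p = r := by
  simp only [DeltaF, if_neg (not_not.2 hp), hr.csInf_eq]

lemma IsTransFn.exists_isPolicy_deltaF_eq_gammaF (hτ : IsTransFn τ) (ℓ : S → L)
    (d : S × S → ℝ) : ∃ P, IsPolicy ℓ τ P ∧ DeltaF ℓ τ d = GammaF ℓ P d := by
  choose ω hω hleast using fun p : S × S ↦ (hτ p.1).exists_optimal_coupling (hτ p.2) d
  refine ⟨fun p ↦ if ℓ p.1 = ℓ p.2 then ω p else Pi.single p 1,
    isPolicy_iff_apply_self_eq_one.2 ⟨fun p ↦ ?_, fun p hp ↦ ?_, fun p hp ↦ ?_⟩, funext fun p ↦ ?_⟩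
  · split_ifs
    · exact (hω p).1
    · exact single_mem_stdSimplex ℝ p
  · simpa only [if_pos hp] using hω p
  · simp only [if_neg hp, Pi.single_eq_same]
  · by_cases hp : ℓ p.1 = ℓ p.2
    · simp only [deltaF_apply_of_isLeast hp (hleast p), GammaF, if_pos hp, if_neg (not_not.2 hp)]
    · simp only [DeltaF, GammaF, if_pos hp]

lemma IsPolicy.deltaF_le_gammaF (hP : IsPolicy ℓ τ P) (d : S × S → ℝ) :
    DeltaF ℓ τ d ≤ GammaF ℓ P d := by
  intro p
  by_cases hp : ℓ p.1 = ℓ p.2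
  · obtain ⟨ω, -, hleast⟩ :=
      (hP.isTransFn p.1).exists_optimal_coupling (hP.isTransFn p.2) d
    rw [deltaF_apply_of_isLeast hp hleast, GammaF, if_neg (not_not.2 hp)]
    exact hleast.2 ⟨P p, hP.2.1 p hp, rfl⟩
  · simp only [DeltaF, GammaF, if_pos hp, le_refl]

lemma IsTransFn.deltaF_mono (hτ : IsTransFn τ) (ℓ : S → L) : Monotone (DeltaF ℓ τ) := by
  intro d e hde
  obtain ⟨P, hP, heq⟩ := hτ.exists_isPolicy_deltaF_eq_gammaF ℓ e
  calc DeltaF ℓ τ d ≤ GammaF ℓ P d := hP.deltaF_le_gammaF d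
    _ ≤ GammaF ℓ P e := gammaF_mono ℓ hP.1 hde
    _ = DeltaF ℓ τ e := heq.symm

lemma Is01.deltaF (hd : Is01 d) (ℓ : S → L) (hτ : IsTransFn τ) : Is01 (DeltaF ℓ τ d) := by
  obtain ⟨P, hP, heq⟩ := hτ.exists_isPolicy_deltaF_eq_gammaF ℓ d
  exact heq ▸ hd.gammaF ℓ hP.1

lemma IsLfpOn.le_of_deltaF_le (hτ : IsTransFn τ) (hd : IsLfpOn (DeltaF ℓ τ) d) (he : Is01 e)
    (hle : DeltaF ℓ τ e ≤ e) : d ≤ e :=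
  hd.le_of_map_le (fun _ h ↦ h.deltaF ℓ hτ) ((hτ.deltaF_mono ℓ).monotoneOn _) he hle

end Policies

section Sublevel

variable {S L : Type*} [Fintype S]

/-- The triples `(τ, P, d)` witnessing `δ_τ(s,t) ≤ c` at the pair `x = (s,t)`: a policy `P` for `τ`
and a `[0,1]`-valued pre-fixed point `d` of `Γ_P` with `d x ≤ c`. -/
def sublevelWitnesses (ℓ : S → L) (x : S × S) (c : ℝ) :
    Set ((S → S → ℝ) × (S × S → S × S → ℝ) × (S × S → ℝ)) :=
  {w | IsPolicy ℓ w.1 w.2.1 ∧ Is01 w.2.2 ∧ GammaF ℓ w.2.1 w.2.2 ≤ w.2.2 ∧ w.2.2 x ≤ c}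

lemma isClosed_sublevelWitnesses (ℓ : S → L) (x : S × S) (c : ℝ) :
    IsClosed (sublevelWitnesses ℓ x c) := by
  have hpolicy := (isClosed_setOf_isPolicy ℓ).preimage
    (f := fun w : (S → S → ℝ) × (S × S → S × S → ℝ) × (S × S → ℝ) ↦ (w.1, w.2.1)) (by fun_prop)
  have h01 := isCompact_setOf_is01.isClosed.preimage
    (f := fun w : (S → S → ℝ) × (S × S → S × S → ℝ) × (S × S → ℝ) ↦ w.2.2) (by fun_prop)
  exact hpolicy.inter <| h01.inter <|
    (isClosed_le ((continuous_gammaF ℓ).comp continuous_snd) continuous_snd.snd).inter <|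
      isClosed_le ((continuous_apply x).comp continuous_snd.snd) continuous_const

lemma isCompact_sublevelWitnesses (ℓ : S → L) (x : S × S) (c : ℝ) :
    IsCompact (sublevelWitnesses ℓ x c) := by
  have htrans : IsCompact (Set.univ.pi fun _ : S ↦ {μ : S → ℝ | IsDist μ}) :=
    isCompact_univ_pi fun _ ↦ isCompact_setOf_isDist
  have hpolicy : IsCompact (Set.univ.pi fun _ : S × S ↦ {μ : S × S → ℝ | IsDist μ}) :=
    isCompact_univ_pi fun _ ↦ isCompact_setOf_isDist
  refine (htrans.prod (hpolicy.prod isCompact_setOf_is01)).of_isClosed_subset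
    (isClosed_sublevelWitnesses ℓ x c) ?_
  rintro ⟨τ, P, d⟩ ⟨hP, hd, -⟩
  exact ⟨fun s _ ↦ hP.isTransFn s, fun p _ ↦ hP.1 p, hd⟩

lemma mem_image_fst_sublevelWitnesses_iff {ℓ : S → L} {x : S × S} {c : ℝ} {τ : S → S → ℝ} :
    τ ∈ Prod.fst '' sublevelWitnesses ℓ x c ↔
      IsTransFn τ ∧ ∃ d, Is01 d ∧ DeltaF ℓ τ d ≤ d ∧ d x ≤ c := by
  constructor
  · rintro ⟨⟨τ, P, d⟩, ⟨hP, hd, hle, hx⟩, rfl⟩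
    exact ⟨hP.isTransFn, d, hd, (hP.deltaF_le_gammaF d).trans hle, hx⟩
  · rintro ⟨hτ, d, hd, hle, hx⟩
    obtain ⟨P, hP, heq⟩ := hτ.exists_isPolicy_deltaF_eq_gammaF ℓ d
    exact ⟨(τ, P, d), ⟨hP, hd, heq ▸ hle, hx⟩, rfl⟩

lemma isClosed_setOf_exists_deltaF_le (ℓ : S → L) (x : S × S) (c : ℝ) :
    IsClosed {τ | IsTransFn τ ∧ ∃ d, Is01 d ∧ DeltaF ℓ τ d ≤ d ∧ d x ≤ c} := by
  simp only [← mem_image_fst_sublevelWitnesses_iff, Set.ofPred_mem_eq]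
  exact ((isCompact_sublevelWitnesses ℓ x c).image continuous_fst).isClosed

end Sublevel

theorem bisim_distance_lower_semicontinuous_general {ι S L : Type*} [Fintype S]
    {F : Filter ι} [F.NeBot] (ℓ : S → L) (x : S × S)
    (τ : S → S → ℝ) (σ : ι → S → S → ℝ) (hσ : ∀ i, IsTransFn (σ i))
    (hconv : Tendsto (fun i ↦ dF (σ i) τ) F (𝓝 0))
    (δ : S × S → ℝ) (hδ : IsLfpOn (DeltaF ℓ τ) δ)
    (d : ι → S × S → ℝ) (hd : ∀ i, Is01 (d i)) (hle : ∀ i, DeltaF ℓ (σ i) (d i) ≤ d i) :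
    δ x ≤ liminf (fun i ↦ d i x) F := by
  have hbdd : IsCoboundedUnder (· ≥ ·) F fun i ↦ d i x :=
    (isBoundedUnder_of ⟨1, fun i ↦ (hd i x).2⟩).isCoboundedUnder_ge
  by_contra! hlt
  obtain ⟨c, hliminf, hc⟩ := exists_between hlt
  have hfreq : ∃ᶠ i in F, IsTransFn (σ i) ∧ ∃ e, Is01 e ∧ DeltaF ℓ (σ i) e ≤ e ∧ e x ≤ c :=
    (frequently_lt_of_liminf_lt hbdd hliminf).mono fun i hi ↦ ⟨hσ i, d i, hd i, hle i, hi.le⟩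
  obtain ⟨hτ, e, he, hpre, hex⟩ :=
    (isClosed_setOf_exists_deltaF_le ℓ x c).mem_of_frequently_of_tendsto hfreq
      (tendsto_of_tendsto_dF hconv)
  exact ((hδ.le_of_deltaF_le hτ he hpre x).trans hex).not_gt hc

/-- Proposition 5: the probabilistic bisimilarity distance function is lower
semi-continuous: if `τ_n → τ` then `liminf_n δ_{τ_n}(s,t) ≥ δ_τ(s,t)`. -/
theorem bisim_distance_lower_semicontinuous {S L : Type*} [Fintype S] [Nonempty S] [Fintype L]
    (ℓ : S → L) (hℓ : ∃ a b : S, ℓ a ≠ ℓ b) (s t : S)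
    (τ : S → S → ℝ) (hτ : IsTransFn τ)
    (τn : ℕ → S → S → ℝ) (hτn : ∀ n, IsTransFn (τn n))
    (hconv : Tendsto (fun n => dF (τn n) τ) atTop (nhds 0))
    (δ : S × S → ℝ) (hδ : IsLfpOn (DeltaF ℓ τ) δ)
    (δn : ℕ → S × S → ℝ) (hδn : ∀ n, IsLfpOn (DeltaF ℓ (τn n)) (δn n)) :
    δ (s, t) ≤ liminf (fun n => δn n (s, t)) atTop := by
  exact bisim_distance_lower_semicontinuous_general ℓ (s, t) τ τn hτn hconv δ hδ δn
    (fun n ↦ (hδn n).1) fun n ↦ (hδn n).2.1.le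
end
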